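/- Let A be a finite-dimensional left Leibniz algebra over a field F of characteristic zero, let B be an ideal of A, let R = rad(B) and N = nilrad(B). Then R and N are ideals of A and A·R + R·A ⊆ N. -/

import Mathlib

open Submodule

section LeibnizDefs

variable {F : Type*} {A : Type*} [Field F] [AddCommGroup A] [Module F A]

/-- The span of all products `b*c` with `b ∈ B`, `c ∈ C`. -/
def mulSub (mul : A →ₗ[F] A →ₗ[F] A) (B C : Submodule F A) : Submodule F A :=
  Submodule.span F {z : A | ∃ b ∈ B, ∃ c ∈ C, mul b c = z}

/-- `fSub mul B C = B·C + C·B`, the function `f(B,C)`. -/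
def fSub (mul : A →ₗ[F] A →ₗ[F] A) (B C : Submodule F A) : Submodule F A :=
  mulSub mul B C ⊔ mulSub mul C B

/-- `fIter mul B C n = f^{n+1}(B,C)` (so index `0` is `f^1(B,C) = f(B,C)`). -/
def fIter (mul : A →ₗ[F] A →ₗ[F] A) (B C : Submodule F A) : ℕ → Submodule F A
  | 0 => fSub mul B C
  | n + 1 => fSub mul B (fIter mul B C n)

/-- `lcs mul B n = B^{n+1}`, the lower central series (index `0` is `B^1 = B`). -/
def lcs (mul : A →ₗ[F] A →ₗ[F] A) (B : Submodule F A) : ℕ → Submodule F A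
  | 0 => B
  | n + 1 => mulSub mul B (lcs mul B n)

/-- `ds mul B n = B^{(n+1)}`, the derived series (index `0` is `B^{(1)} = B`). -/
def ds (mul : A →ₗ[F] A →ₗ[F] A) (B : Submodule F A) : ℕ → Submodule F A
  | 0 => B
  | n + 1 => mulSub mul (ds mul B n) (ds mul B n)

/-- `B^ω = ⋂_{i ≥ 1} B^i`. -/
def omegaSub (mul : A →ₗ[F] A →ₗ[F] A) (B : Submodule F A) : Submodule F A :=
  ⨅ n, lcs mul B n

/-- `B` is a subalgebra: a subspace closed under multiplication. -/
def IsSubalg (mul : A →ₗ[F] A →ₗ[F] A) (B : Submodule F A) : Prop :=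
  ∀ x ∈ B, ∀ y ∈ B, mul x y ∈ B

/-- `I` is an ideal of the subalgebra `S`: `I ⊆ S` and `xI + Ix ⊆ I` for all `x ∈ S`. -/
def IsIdealIn (mul : A →ₗ[F] A →ₗ[F] A) (I S : Submodule F A) : Prop :=
  I ≤ S ∧ ∀ x ∈ S, ∀ y ∈ I, mul x y ∈ I ∧ mul y x ∈ I

/-- `B` is subinvariant in `S`: there is a chain of subalgebras
`B = c 0 ⊆ c 1 ⊆ ⋯ ⊆ c t = S` with each term an ideal of the next. -/
def IsSubinvariantIn (mul : A →ₗ[F] A →ₗ[F] A) (B S : Submodule F A) : Prop :=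
  ∃ (t : ℕ) (c : ℕ → Submodule F A), c 0 = B ∧ c t = S ∧
    (∀ i ≤ t, IsSubalg mul (c i)) ∧ ∀ i < t, IsIdealIn mul (c i) (c (i + 1))

/-- `B` is nilpotent: `B^m = 0` for some `m`. -/
def IsNilpotentSub (mul : A →ₗ[F] A →ₗ[F] A) (B : Submodule F A) : Prop :=
  ∃ m, lcs mul B m = ⊥

/-- `B` is solvable: `B^{(m)} = 0` for some `m`. -/
def IsSolvableSub (mul : A →ₗ[F] A →ₗ[F] A) (B : Submodule F A) : Prop :=
  ∃ m, ds mul B m = ⊥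

/-- The centralizer `Z_A(B) = {x : xb = 0 = bx for all b ∈ B}`. -/
def centralizerSet (mul : A →ₗ[F] A →ₗ[F] A) (B : Submodule F A) : Set A :=
  {x : A | ∀ b ∈ B, mul x b = 0 ∧ mul b x = 0}

/-- `R` is the radical (the maximal solvable ideal) of the subalgebra `S`. -/
def IsRadicalIn (mul : A →ₗ[F] A →ₗ[F] A) (S R : Submodule F A) : Prop :=
  IsIdealIn mul R S ∧ IsSolvableSub mul R ∧
    ∀ T, IsIdealIn mul T S → IsSolvableSub mul T → T ≤ R

/-- `N` is the nilradical (the maximal nilpotent ideal) of the subalgebra `S`. -/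
def IsNilradicalIn (mul : A →ₗ[F] A →ₗ[F] A) (S N : Submodule F A) : Prop :=
  IsIdealIn mul N S ∧ IsNilpotentSub mul N ∧
    ∀ T, IsIdealIn mul T S → IsNilpotentSub mul T → T ≤ N

/-- `H` is a Cartan subalgebra: a nilpotent self-normalizing subalgebra. -/
def IsCartan (mul : A →ₗ[F] A →ₗ[F] A) (H : Submodule F A) : Prop :=
  IsSubalg mul H ∧ IsNilpotentSub mul H ∧
    ∀ x : A, (∀ h ∈ H, mul x h ∈ H ∧ mul h x ∈ H) → x ∈ H

/-- The subalgebra generated by a set: the smallest subalgebra containing it. -/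
def subalgGen (mul : A →ₗ[F] A →ₗ[F] A) (s : Set A) : Submodule F A :=
  sInf {S : Submodule F A | IsSubalg mul S ∧ s ⊆ (S : Set A)}

end LeibnizDefs

/-!
*Stability of the radical.* Let `D` be a derivation of `A` preserving `B` and let `T` be an ideal of
`B` whose square has all its iterated images under `D` in `R`. If `D ^ i` maps `T` into `R` for
`i < j`, then modulo `R` only the middle term of the Leibniz rule for `D ^ (2 * j) (s * t)` is left,
so `(D ^ j s) * (D ^ j t) ∈ R`, and `R + D ^ j T` is an ideal of `B` with square in `R`, hence
equal to `R`. Climbing up the derived series of `R` gives `D R ⊆ R`, in particular for left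
multiplications. For right multiplications, `x y + y x` is in the left kernel of the product, whose
intersection with `B` squares to zero.

*Nilpotency.* The left multiplications by `R` form a solvable ideal `I` of the Lie algebra `L` of
all left multiplications, and `⁅L, I⁆` acts nilpotently on every finite-dimensional `L`-module. It
suffices to show that it acts by zero on an irreducible one. By Jacobson's lemma, `⁅x, a⁆` is
nilpotent if it commutes with the algebraic element `a`; so if `⁅⁅P, Q⁆, Q⁆` acts by zero, then
`⁅P, Q⁆` consists of nilpotent operators and, by Engel's theorem and irreducibility, acts by zero.
For a term `D` of the derived series of `I` with `⁅⁅D, D⁆, ⁅D, D⁆⁆` acting by zero, the pairs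
`(P, Q) = (L, ⁅D, D⁆)` and then `(D, D)` show that `⁅D, D⁆` acts by zero. Descending to `⁅I, I⁆`,
the pair `(L, I)` finishes the proof. By Engel's theorem again, `A R + R A` is a nilpotent ideal.
-/

section LieAction

attribute [local instance] LieRing.ofAssociativeRing

section Jacobson

open Polynomial

theorem commute_aeval_of_commute {F E : Type*} [CommSemiring F] [Semiring E] [Algebra F E]
    {y a : E} (hya : Commute y a) (p : F[X]) : Commute y (aeval a p) := by
  have hcentralizer : Algebra.adjoin F {a} ≤ Subalgebra.centralizer F {y} := by
    rw [Algebra.adjoin_le_iff, Set.singleton_subset_iff, SetLike.mem_coe,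
      Subalgebra.mem_centralizer_iff]
    exact fun _ h => h ▸ hya
  exact (Subalgebra.mem_centralizer_iff F).1 (hcentralizer (aeval_mem_adjoin_singleton F a)) y rfl

variable {F E : Type*} [Ring E] {x a : E}

theorem lie_aeval_eq_aeval_derivative_mul [CommRing F] [Algebra F E] (hxa : Commute ⁅x, a⁆ a)
    (p : F[X]) : ⁅x, aeval a p⁆ = aeval a (derivative p) * ⁅x, a⁆ := by
  induction p using Polynomial.induction_on with
  | C c => simp [Ring.lie_def, Algebra.commutes]
  | add p q hp hq => rw [map_add, lie_add, hp, hq, derivative_add, map_add, add_mul]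
  | monomial n c ih =>
    rw [pow_succ, ← mul_assoc]
    set q := C c * X ^ n
    calc ⁅x, aeval a (q * X)⁆ = ⁅x, aeval a q⁆ * a + aeval a q * ⁅x, a⁆ := by
          simp only [Ring.lie_def, map_mul, aeval_X]
          noncomm_ring
      _ = aeval a (derivative q) * (a * ⁅x, a⁆) + aeval a q * ⁅x, a⁆ := by
          rw [ih, mul_assoc, hxa.eq]
      _ = aeval a (derivative (q * X)) * ⁅x, a⁆ := by
          simp only [derivative_mul, derivative_X, mul_one, map_add, map_mul, aeval_X, add_mul,
            mul_assoc]

theorem exists_aeval_iterate_derivative_mul_lie_pow_eq_zero [CommRing F] [Algebra F E]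
    (hxa : Commute ⁅x, a⁆ a) {p : F[X]} (hp : aeval a p = 0) (k : ℕ) :
    ∃ m, aeval a (derivative^[k] p) * ⁅x, a⁆ ^ m = 0 := by
  induction k with
  | zero => exact ⟨0, by simpa using hp⟩
  | succ k ih =>
    obtain ⟨m, hm⟩ := ih
    set y := ⁅x, a⁆
    set q := derivative^[k] p
    have hcomm (r : F[X]) : y ^ m * aeval a r = aeval a r * y ^ m :=
      ((commute_aeval_of_commute hxa r).pow_left m).eq
    refine ⟨m + 1 + m, ?_⟩
    rw [Function.iterate_succ_apply']
    calc aeval a (derivative q) * y ^ (m + 1 + m)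
        = y ^ m * (aeval a (derivative q) * y) * y ^ m := by
          rw [← mul_assoc, hcomm, pow_add, pow_succ]
          simp only [mul_assoc]
      _ = y ^ m * x * (aeval a q * y ^ m) - (y ^ m * aeval a q) * x * y ^ m := by
          rw [← lie_aeval_eq_aeval_derivative_mul hxa, Ring.lie_def]
          noncomm_ring
      _ = 0 := by rw [hcomm, hm, mul_zero, zero_mul, zero_mul, sub_zero]

-- Jacobson's lemma: differentiate a polynomial killing `a` until only a nonzero constant is left.
theorem isNilpotent_lie_of_commute_of_isAlgebraic [Field F] [CharZero F] [Algebra F E]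
    (hxa : Commute ⁅x, a⁆ a) (ha : IsAlgebraic F a) : IsNilpotent ⁅x, a⁆ := by
  obtain ⟨p, hp0, hp⟩ := ha
  obtain ⟨m, hm⟩ := exists_aeval_iterate_derivative_mul_lie_pow_eq_zero hxa hp p.natDegree
  have hconst : derivative^[p.natDegree] p = C ((p.natDegree.factorial : F) * p.leadingCoeff) := by
    rw [← factorial_smul_hasseDeriv, LinearMap.smul_apply, hasseDeriv_natDegree_eq_C,
      nsmul_eq_mul, C_mul, C_eq_natCast]
  have hne : (p.natDegree.factorial : F) * p.leadingCoeff ≠ 0 :=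
    mul_ne_zero (Nat.cast_ne_zero.2 p.natDegree.factorial_ne_zero) (leadingCoeff_ne_zero.2 hp0)
  rw [hconst, aeval_C, ← Algebra.smul_def] at hm
  exact ⟨m, (smul_eq_zero_iff_right hne).1 hm⟩

end Jacobson

theorem isNilpotent_of_restrict_of_mapQ {R M : Type*} [Ring R] [AddCommGroup M] [Module R M]
    {f : Module.End R M} {p : Submodule R M} (hp : p ≤ p.comap f)
    (hsub : IsNilpotent (f.restrict hp)) (hquot : IsNilpotent (p.mapQ p f hp)) :
    IsNilpotent f := by
  obtain ⟨m, hm⟩ := hsub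
  obtain ⟨n, hn⟩ := hquot
  refine ⟨m + n, LinearMap.ext fun v => ?_⟩
  have hv : (f ^ n) v ∈ p := by
    rw [← p.mapQ_pow hp] at hn
    exact (Submodule.Quotient.mk_eq_zero p).1 (congrArg (· (Submodule.Quotient.mk v)) hn)
  have hrestrict : (f.restrict hp ^ m) ⟨(f ^ n) v, hv⟩ = 0 := by rw [hm]; rfl
  rw [Module.End.pow_restrict] at hrestrict
  rw [pow_add, Module.End.mul_apply]
  exact congrArg Subtype.val hrestrict

section LieModule

variable {F L V : Type*} [CommRing F] [LieRing L] [LieAlgebra F L]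
  [AddCommGroup V] [Module F V] [LieRingModule L V] [LieModule F L V]

theorem commute_toEnd_of_lie_mem_ker {x y : L} (h : ⁅x, y⁆ ∈ LieModule.ker F L V) :
    Commute (LieModule.toEnd F L V x) (LieModule.toEnd F L V y) := by
  rw [commute_iff_lie_eq, ← LieHom.map_lie]
  exact h

theorem exists_lcs_eq_bot_of_forall_isNilpotent_toEnd [IsNoetherian F V] {J : LieIdeal F L}
    (hJ : ∀ y ∈ J, IsNilpotent (LieModule.toEnd F L V y)) : ∃ n, J.lcs V n = ⊥ := by
  have hnil : LieModule.IsNilpotent J V :=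
    (LieModule.isNilpotent_iff_forall' (R := F)).2 fun y => hJ y y.2
  obtain ⟨n, hn⟩ := (LieModule.isNilpotent_iff F J V).1 hnil
  refine ⟨n, ?_⟩
  rw [← LieSubmodule.toSubmodule_inj, LieIdeal.coe_lcs_eq, hn]
  rfl

theorem le_ker_of_forall_isNilpotent_toEnd [IsNoetherian F V] [LieModule.IsIrreducible F L V]
    {J : LieIdeal F L} (hJ : ∀ y ∈ J, IsNilpotent (LieModule.toEnd F L V y)) :
    J ≤ LieModule.ker F L V := by
  obtain ⟨n, hn⟩ := exists_lcs_eq_bot_of_forall_isNilpotent_toEnd hJ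
  have hne : ⁅J, (⊤ : LieSubmodule F L V)⁆ ≠ ⊤ := by
    intro htop
    have hconst (k : ℕ) : J.lcs V k = ⊤ := by
      induction k with
      | zero => exact LieIdeal.lcs_zero J V
      | succ k ih => rw [LieIdeal.lcs_succ, ih, htop]
    exact bot_ne_top (hn.symm.trans (hconst n))
  have hbot := (IsSimpleOrder.eq_bot_or_eq_top _).resolve_right hne
  intro y hy
  rw [LieModule.mem_ker]
  exact fun v => (LieSubmodule.lie_eq_bot_iff _ _).1 hbot y hy v (LieSubmodule.mem_top v)

end LieModule

section CharZero

variable {F L V : Type*} [Field F] [CharZero F] [LieRing L] [LieAlgebra F L]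
  [AddCommGroup V] [Module F V] [FiniteDimensional F V] [LieRingModule L V] [LieModule F L V]

theorem isNilpotent_toEnd_of_mem_lie {P Q : LieIdeal F L}
    (hQ : ⁅⁅P, Q⁆, Q⁆ ≤ LieModule.ker F L V) {y : L} (hy : y ∈ ⁅P, Q⁆) :
    IsNilpotent (LieModule.toEnd F L V y) := by
  have hself : ⁅⁅P, Q⁆, ⁅P, Q⁆⁆ ≤ LieModule.ker F L V :=
    (LieSubmodule.mono_lie_right _ (LieSubmodule.lie_le_right Q P)).trans hQ
  rw [← LieSubmodule.mem_toSubmodule, LieSubmodule.lieIdeal_oper_eq_linear_span'] at hy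
  have hmem {u : L} (hu : u ∈ Submodule.span F {z : L | ∃ p ∈ P, ∃ q ∈ Q, ⁅p, q⁆ = z}) :
      u ∈ ⁅P, Q⁆ := by
    rwa [← LieSubmodule.mem_toSubmodule, LieSubmodule.lieIdeal_oper_eq_linear_span']
  induction hy using Submodule.span_induction with
  | mem _ hz =>
    obtain ⟨p, hp, q, hq, rfl⟩ := hz
    rw [LieHom.map_lie]
    refine isNilpotent_lie_of_commute_of_isAlgebraic (F := F) ?_ (Algebra.IsAlgebraic.isAlgebraic _)
    rw [← LieHom.map_lie]
    exact commute_toEnd_of_lie_mem_ker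
      (hQ (LieSubmodule.lie_mem_lie (LieSubmodule.lie_mem_lie hp hq) hq))
  | zero => simp
  | add u v hu hv ihu ihv =>
    have hcomm : Commute (LieModule.toEnd F L V u) (LieModule.toEnd F L V v) :=
      commute_toEnd_of_lie_mem_ker (hself (LieSubmodule.lie_mem_lie (hmem hu) (hmem hv)))
    rw [map_add]
    exact hcomm.isNilpotent_add ihu ihv
  | smul c u _ ih =>
    rw [map_smul]
    exact ih.smul c

theorem lie_le_ker_of_lie_lie_le_ker [LieModule.IsIrreducible F L V] {P Q : LieIdeal F L}
    (hQ : ⁅⁅P, Q⁆, Q⁆ ≤ LieModule.ker F L V) : ⁅P, Q⁆ ≤ LieModule.ker F L V :=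
  le_ker_of_forall_isNilpotent_toEnd fun _ hy => isNilpotent_toEnd_of_mem_lie hQ hy

theorem top_lie_le_ker_of_lie_self_le_ker [LieModule.IsIrreducible F L V] {D : LieIdeal F L}
    (hD : ⁅D, D⁆ ≤ LieModule.ker F L V) : ⁅(⊤ : LieIdeal F L), D⁆ ≤ LieModule.ker F L V :=
  lie_le_ker_of_lie_lie_le_ker
    ((LieSubmodule.mono_lie_left D (LieSubmodule.lie_le_right D ⊤)).trans hD)

theorem lie_self_le_ker_of_lie_lie_self_le_ker [LieModule.IsIrreducible F L V] {D : LieIdeal F L}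
    (hD : ⁅⁅D, D⁆, ⁅D, D⁆⁆ ≤ LieModule.ker F L V) : ⁅D, D⁆ ≤ LieModule.ker F L V := by
  have hcentral : ⁅⁅D, D⁆, D⁆ ≤ LieModule.ker F L V := by
    rw [LieSubmodule.lie_comm]
    exact (LieSubmodule.mono_lie le_top le_rfl).trans (top_lie_le_ker_of_lie_self_le_ker hD)
  exact lie_le_ker_of_lie_lie_le_ker hcentral

theorem top_lie_le_ker_of_isSolvable [LieModule.IsIrreducible F L V] (I : LieIdeal F L)
    [LieAlgebra.IsSolvable I] : ⁅(⊤ : LieIdeal F L), I⁆ ≤ LieModule.ker F L V := by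
  obtain ⟨k, hk⟩ := LieAlgebra.IsSolvable.solvable F I
  rw [LieIdeal.derivedSeries_eq_bot_iff] at hk
  have hdescent (n : ℕ) (hn : ⁅LieAlgebra.derivedSeriesOfIdeal F L n I,
      LieAlgebra.derivedSeriesOfIdeal F L n I⁆ ≤ LieModule.ker F L V) :
      ⁅I, I⁆ ≤ LieModule.ker F L V := by
    induction n with
    | zero => exact hn
    | succ n ih =>
      rw [LieAlgebra.derivedSeriesOfIdeal_succ] at hn
      exact ih (lie_self_le_ker_of_lie_lie_self_le_ker hn)
  refine top_lie_le_ker_of_lie_self_le_ker (hdescent k ?_)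
  exact (LieSubmodule.lie_le_right _ _).trans (hk.trans_le bot_le)

end CharZero

theorem isNilpotent_toEnd_of_mem_top_lie_of_isSolvable {F L : Type*} [Field F] [CharZero F]
    [LieRing L] [LieAlgebra F L] (I : LieIdeal F L) [LieAlgebra.IsSolvable I]
    (V : Type*) [AddCommGroup V] [Module F V] [FiniteDimensional F V]
    [LieRingModule L V] [LieModule F L V] {y : L} (hy : y ∈ ⁅(⊤ : LieIdeal F L), I⁆) :
    IsNilpotent (LieModule.toEnd F L V y) := by
  induction hd : Module.finrank F V using Nat.strong_induction_on generalizing V with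
  | _ d ih =>
  subst hd
  rcases subsingleton_or_nontrivial V with hV | hV
  · exact ⟨1, Subsingleton.elim _ _⟩
  by_cases hirr : LieModule.IsIrreducible F L V
  · have hy0 : LieModule.toEnd F L V y = 0 := top_lie_le_ker_of_isSolvable I hy
    exact hy0 ▸ IsNilpotent.zero
  obtain ⟨W, hbot, htop⟩ : ∃ W : LieSubmodule F L V, W ≠ ⊥ ∧ W ≠ ⊤ := by
    by_contra! h
    exact hirr (LieModule.IsIrreducible.mk h)
  have hlt : Module.finrank F W < Module.finrank F V :=
    Submodule.finrank_lt (s := (W : Submodule F V)) (by simpa using htop)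
  have hpos : 0 < Module.finrank F W :=
    have := (LieSubmodule.nontrivial_iff_ne_bot F L V).2 hbot
    Module.finrank_pos
  have hadd : Module.finrank F (V ⧸ W) + Module.finrank F W = Module.finrank F V :=
    Submodule.finrank_quotient_add_finrank (W : Submodule F V)
  have hinv : (W : Submodule F V) ≤ (W : Submodule F V).comap (LieModule.toEnd F L V y) :=
    fun _ hv => W.lie_mem hv
  exact isNilpotent_of_restrict_of_mapQ hinv (ih _ hlt W rfl) (ih _ (by omega) (V ⧸ W) rfl)

end LieAction

section LeibnizBasic

variable {F A : Type*} [Field F] [AddCommGroup A] [Module F A] {mul : A →ₗ[F] A →ₗ[F] A}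

/-- `D` is a derivation of the (not necessarily associative) product `mul`. -/
def IsDerivationOf (mul : A →ₗ[F] A →ₗ[F] A) (D : Module.End F A) : Prop :=
  ∀ x y, D (mul x y) = mul (D x) y + mul x (D y)

/-- The left Leibniz identity, in the form: every left multiplication is a derivation. -/
def IsLeftLeibniz (mul : A →ₗ[F] A →ₗ[F] A) : Prop :=
  ∀ x, IsDerivationOf mul (mul x)

theorem mul_mem_mulSub {P Q : Submodule F A} {x y : A} (hx : x ∈ P) (hy : y ∈ Q) :
    mul x y ∈ mulSub mul P Q :=
  subset_span ⟨x, hx, y, hy, rfl⟩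

theorem mulSub_le {P Q T : Submodule F A} :
    mulSub mul P Q ≤ T ↔ ∀ x ∈ P, ∀ y ∈ Q, mul x y ∈ T := by
  refine ⟨fun h x hx y hy => h (mul_mem_mulSub hx hy), fun h => span_le.2 ?_⟩
  rintro _ ⟨x, hx, y, hy, rfl⟩
  exact h x hx y hy

theorem mulSub_mono {P P' Q Q' : Submodule F A} (hP : P ≤ P') (hQ : Q ≤ Q') :
    mulSub mul P Q ≤ mulSub mul P' Q' :=
  mulSub_le.2 fun _ hx _ hy => mul_mem_mulSub (hP hx) (hQ hy)

theorem ds_succ_le_ds {P Q : Submodule F A} (h : mulSub mul P P ≤ Q) (n : ℕ) :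
    ds mul P (n + 1) ≤ ds mul Q n := by
  induction n with
  | zero => exact h
  | succ n ih => exact mulSub_mono ih ih

theorem isSolvableSub_of_mulSub_self_le {P Q : Submodule F A} (h : mulSub mul P P ≤ Q)
    (hQ : IsSolvableSub mul Q) : IsSolvableSub mul P := by
  obtain ⟨m, hm⟩ := hQ
  exact ⟨m + 1, le_bot_iff.1 ((ds_succ_le_ds h m).trans_eq hm)⟩

theorem IsSubalg.ds_le {P : Submodule F A} (hP : IsSubalg mul P) (n : ℕ) : ds mul P n ≤ P := by
  induction n with
  | zero => exact le_rfl
  | succ n ih => exact (mulSub_mono ih ih).trans (mulSub_le.2 hP)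

theorem IsSubalg.ds_le_lcs {P : Submodule F A} (hP : IsSubalg mul P) (n : ℕ) :
    ds mul P n ≤ lcs mul P n := by
  induction n with
  | zero => exact le_rfl
  | succ n ih => exact mulSub_mono (hP.ds_le n) ih

theorem IsSubalg.isSolvableSub {P : Submodule F A} (hP : IsSubalg mul P)
    (hnil : IsNilpotentSub mul P) : IsSolvableSub mul P := by
  obtain ⟨m, hm⟩ := hnil
  exact ⟨m, le_bot_iff.1 ((hP.ds_le_lcs m).trans_eq hm)⟩

theorem IsIdealIn.isSubalg {I S : Submodule F A} (hI : IsIdealIn mul I S) : IsSubalg mul I :=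
  fun x hx y hy => (hI.2 x (hI.1 hx) y hy).1

theorem isIdealIn_top_iff_fSub_le {I : Submodule F A} :
    IsIdealIn mul I ⊤ ↔ fSub mul ⊤ I ≤ I := by
  rw [fSub, sup_le_iff, mulSub_le, mulSub_le]
  exact ⟨fun h => ⟨fun x hx y hy => (h.2 x hx y hy).1, fun y hy x hx => (h.2 x hx y hy).2⟩,
    fun h => ⟨le_top, fun x hx y hy => ⟨h.1 x hx y hy, h.2 y hy x hx⟩⟩⟩

theorem fSub_mono {P P' Q Q' : Submodule F A} (hP : P ≤ P') (hQ : Q ≤ Q') :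
    fSub mul P Q ≤ fSub mul P' Q' :=
  sup_le_sup (mulSub_mono hP hQ) (mulSub_mono hQ hP)

theorem IsIdealIn.anti {I S T : Submodule F A} (hI : IsIdealIn mul I T) (hIS : I ≤ S)
    (hST : S ≤ T) : IsIdealIn mul I S :=
  ⟨hIS, fun x hx => hI.2 x (hST hx)⟩

theorem IsIdealIn.inf {I J S : Submodule F A} (hI : IsIdealIn mul I S) (hJ : IsIdealIn mul J S) :
    IsIdealIn mul (I ⊓ J) S :=
  ⟨inf_le_left.trans hI.1, fun x hx y hy =>
    ⟨⟨(hI.2 x hx y hy.1).1, (hJ.2 x hx y hy.2).1⟩, (hI.2 x hx y hy.1).2, (hJ.2 x hx y hy.2).2⟩⟩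

theorem IsIdealIn.mulSub_self (hmul : IsLeftLeibniz mul) {I S : Submodule F A}
    (hI : IsIdealIn mul I S) : IsIdealIn mul (mulSub mul I I) S := by
  refine ⟨(mulSub_le.2 hI.isSubalg).trans hI.1, fun x hx y hy => ⟨?_, ?_⟩⟩
  · have hleft : mulSub mul I I ≤ (mulSub mul I I).comap (mul x) := mulSub_le.2 fun b hb c hc => by
      rw [mem_comap, hmul]
      exact add_mem (mul_mem_mulSub (hI.2 x hx b hb).1 hc) (mul_mem_mulSub hb (hI.2 x hx c hc).1)
    exact hleft hy
  · have hright : mulSub mul I I ≤ (mulSub mul I I).comap (mul.flip x) :=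
      mulSub_le.2 fun b hb c hc => by
        rw [mem_comap, LinearMap.flip_apply, ← add_sub_cancel_right (mul (mul b c) x)
          (mul c (mul b x)), ← hmul]
        exact sub_mem (mul_mem_mulSub hb (hI.2 x hx c hc).2)
          (mul_mem_mulSub hc (hI.2 x hx b hb).2)
    exact hright hy

theorem IsIdealIn.ds (hmul : IsLeftLeibniz mul) {I S : Submodule F A} (hI : IsIdealIn mul I S)
    (n : ℕ) : IsIdealIn mul (ds mul I n) S := by
  induction n with
  | zero => exact hI
  | succ n ih => exact ih.mulSub_self hmul

theorem IsRadicalIn.le_of_mulSub_self_le {B R I : Submodule F A} (hR : IsRadicalIn mul B R)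
    (hI : IsIdealIn mul I B) (h : mulSub mul I I ≤ R) : I ≤ R :=
  hR.2.2 I hI (isSolvableSub_of_mulSub_self_le h hR.2.1)

end LeibnizBasic

theorem pow_apply_bilin_eq_sum_choose {R M N P : Type*} [CommSemiring R] [AddCommMonoid M]
    [AddCommMonoid N] [AddCommMonoid P] [Module R M] [Module R N] [Module R P]
    (f : M →ₗ[R] N →ₗ[R] P) {D : Module.End R M} {E : Module.End R N} {G : Module.End R P}
    (h : ∀ x y, G (f x y) = f (D x) y + f x (E y)) (n : ℕ) (x : M) (y : N) :
    (G ^ n) (f x y) = ∑ p ∈ Finset.HasAntidiagonal.antidiagonal n,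
      n.choose p.1 • f ((D ^ p.1) x) ((E ^ p.2) y) := by
  induction n with
  | zero => simp
  | succ n ih =>
    rw [Finset.sum_antidiagonal_choose_succ_nsmul (fun i j => f ((D ^ i) x) ((E ^ j) y)) n,
      pow_succ', Module.End.mul_apply, ih, map_sum, ← Finset.sum_add_distrib]
    refine Finset.sum_congr rfl fun p hp => ?_
    have hchoose : n.choose p.2 = n.choose p.1 :=
      (Nat.choose_symm_of_eq_add (Finset.HasAntidiagonal.mem_antidiagonal.1 hp).symm).symm
    rw [map_nsmul, h, pow_succ', pow_succ', Module.End.mul_apply, Module.End.mul_apply, hchoose,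
      nsmul_add, add_comm]

section DerivationInvariance

variable {F A : Type*} [Field F] [AddCommGroup A] [Module F A] {mul : A →ₗ[F] A →ₗ[F] A}
  {D : Module.End F A}

/-- The largest `D`-invariant subspace of `R`: the vectors whose iterated images under `D` all
lie in `R`. -/
def invtCore (D : Module.End F A) (R : Submodule F A) : Submodule F A :=
  ⨅ j : ℕ, R.comap (D ^ j)

theorem invtCore_le_comap (D : Module.End F A) (R : Submodule F A) (j : ℕ) :
    invtCore D R ≤ R.comap (D ^ j) :=
  iInf_le _ j

theorem IsDerivationOf.pow_apply_mul_sub_mem (hD : IsDerivationOf mul D) {W : Submodule F A}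
    {x y : A} {i j : ℕ}
    (h : ∀ k l, k + l = i + j → k < i ∨ l < j → mul ((D ^ k) x) ((D ^ l) y) ∈ W) :
    (D ^ (i + j)) (mul x y) - (i + j).choose i • mul ((D ^ i) x) ((D ^ j) y) ∈ W := by
  rw [pow_apply_bilin_eq_sum_choose mul hD, ← Finset.add_sum_erase _ _
    (Finset.HasAntidiagonal.mem_antidiagonal.2 (rfl : (i, j).1 + (i, j).2 = i + j)),
    add_sub_cancel_left]
  refine sum_mem fun p hp => nsmul_mem ?_ _
  rw [Finset.mem_erase, Finset.HasAntidiagonal.mem_antidiagonal, ne_eq, Prod.ext_iff] at hp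
  exact h p.1 p.2 hp.2 (by dsimp only at hp; omega)

variable {B R T : Submodule F A} {j : ℕ}

theorem IsDerivationOf.isIdealIn_sup_map_pow (hD : IsDerivationOf mul D)
    (hDB : ∀ b ∈ B, D b ∈ B) (hR : IsIdealIn mul R B) (hT : IsIdealIn mul T B)
    (hlt : ∀ i < j, T ≤ R.comap (D ^ i)) : IsIdealIn mul (R ⊔ T.map (D ^ j)) B := by
  have hpow (n : ℕ) : ∀ b ∈ B, (D ^ n) b ∈ B := Module.End.pow_apply_mem_of_forall_mem n hDB
  refine ⟨sup_le hR.1 (map_le_iff_le_comap.2 fun t ht => hpow j t (hT.1 ht)), fun b hb y hy => ?_⟩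
  obtain ⟨r, hr, _, ⟨t, ht, rfl⟩, rfl⟩ := mem_sup.1 hy
  rw [map_add, map_add, LinearMap.add_apply]
  have hleft : (D ^ j) (mul b t) - mul b ((D ^ j) t) ∈ R := by
    have hsub := hD.pow_apply_mul_sub_mem (W := R) (x := b) (y := t) (i := 0) (j := j)
      fun k l _ hkl => (hR.2 _ (hpow k b hb) _ (hlt l (by omega) ht)).1
    simpa using hsub
  have hright : (D ^ j) (mul t b) - mul ((D ^ j) t) b ∈ R := by
    have hsub := hD.pow_apply_mul_sub_mem (W := R) (x := t) (y := b) (i := j) (j := 0)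
      fun k l _ hkl => (hR.2 _ (hpow l b hb) _ (hlt k (by omega) ht)).2
    simpa using hsub
  have hmem {u v : A} (hu : u ∈ T) (huv : (D ^ j) u - v ∈ R) : v ∈ R ⊔ T.map (D ^ j) := by
    rw [← sub_sub_cancel ((D ^ j) u) v]
    exact sub_mem (mem_sup_right (mem_map_of_mem hu)) (mem_sup_left huv)
  exact ⟨add_mem (mem_sup_left (hR.2 b hb r hr).1) (hmem (hT.2 b hb t ht).1 hleft),
    add_mem (mem_sup_left (hR.2 b hb r hr).2) (hmem (hT.2 b hb t ht).2 hright)⟩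

theorem IsDerivationOf.mul_pow_apply_mem [CharZero F] (hD : IsDerivationOf mul D)
    (hDB : ∀ b ∈ B, D b ∈ B) (hR : IsIdealIn mul R B) (hTB : T ≤ B)
    (hlt : ∀ i < j, T ≤ R.comap (D ^ i)) {s t : A} (hs : s ∈ T) (ht : t ∈ T)
    (hst : (D ^ (j + j)) (mul s t) ∈ R) : mul ((D ^ j) s) ((D ^ j) t) ∈ R := by
  have hpow (n : ℕ) : ∀ b ∈ B, (D ^ n) b ∈ B := Module.End.pow_apply_mem_of_forall_mem n hDB
  have hsub : (D ^ (j + j)) (mul s t) - (j + j).choose j • mul ((D ^ j) s) ((D ^ j) t) ∈ R := by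
    refine hD.pow_apply_mul_sub_mem fun k l _ hkl => ?_
    rcases hkl with hk | hl
    · exact (hR.2 _ (hpow l t (hTB ht)) _ (hlt k hk hs)).2
    · exact (hR.2 _ (hpow k s (hTB hs)) _ (hlt l hl ht)).1
  have hchoose : ((j + j).choose j : F) ≠ 0 :=
    Nat.cast_ne_zero.2 (Nat.choose_pos (Nat.le_add_left j j)).ne'
  rwa [R.sub_mem_iff_right hst, ← Nat.cast_smul_eq_nsmul F, R.smul_mem_iff hchoose] at hsub

theorem IsIdealIn.mulSub_sup_self_le {S : Submodule F A} (hR : IsIdealIn mul R B) (hS : S ≤ B)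
    (hSS : mulSub mul S S ≤ R) : mulSub mul (R ⊔ S) (R ⊔ S) ≤ R := by
  refine mulSub_le.2 fun x hx y hy => ?_
  have hyB : y ∈ B := sup_le hR.1 hS hy
  obtain ⟨r, hr, s, hs, rfl⟩ := mem_sup.1 hx
  rw [map_add, LinearMap.add_apply]
  refine add_mem (hR.2 y hyB r hr).2 ?_
  obtain ⟨r', hr', s', hs', rfl⟩ := mem_sup.1 hy
  rw [map_add]
  exact add_mem (hR.2 s (hS hs) r' hr').1 (hSS (mul_mem_mulSub hs hs'))

theorem IsRadicalIn.le_invtCore_of_mulSub_self_le [CharZero F] (hR : IsRadicalIn mul B R)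
    (hD : IsDerivationOf mul D) (hDB : ∀ b ∈ B, D b ∈ B) (hT : IsIdealIn mul T B)
    (hTT : mulSub mul T T ≤ invtCore D R) : T ≤ invtCore D R := by
  refine le_iInf fun j => ?_
  induction j using Nat.strong_induction_on with
  | _ j hlt =>
  have hideal := hD.isIdealIn_sup_map_pow hDB hR.1 hT hlt
  have hsq : mulSub mul (T.map (D ^ j)) (T.map (D ^ j)) ≤ R := by
    refine mulSub_le.2 ?_
    rintro _ ⟨s, hs, rfl⟩ _ ⟨t, ht, rfl⟩
    exact hD.mul_pow_apply_mem hDB hR.1 hT.1 hlt hs ht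
      (invtCore_le_comap D R (j + j) (hTT (mul_mem_mulSub hs ht)))
  exact map_le_iff_le_comap.1 (le_sup_right.trans (hR.le_of_mulSub_self_le hideal
    (hR.1.mulSub_sup_self_le (le_sup_right.trans hideal.1) hsq)))

theorem IsRadicalIn.le_invtCore [CharZero F] (hmul : IsLeftLeibniz mul)
    (hR : IsRadicalIn mul B R) (hD : IsDerivationOf mul D) (hDB : ∀ b ∈ B, D b ∈ B) :
    R ≤ invtCore D R := by
  obtain ⟨m, hm⟩ := hR.2.1
  have hdescent (n : ℕ) (hn : ds mul R n ≤ invtCore D R) : R ≤ invtCore D R := by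
    induction n with
    | zero => exact hn
    | succ n ih => exact ih (hR.le_invtCore_of_mulSub_self_le hD hDB (hR.1.ds hmul n) hn)
  exact hdescent m (hm.trans_le bot_le)

theorem IsRadicalIn.derivation_mem [CharZero F] (hmul : IsLeftLeibniz mul)
    (hR : IsRadicalIn mul B R) (hD : IsDerivationOf mul D) (hDB : ∀ b ∈ B, D b ∈ B) {r : A}
    (hr : r ∈ R) : D r ∈ R :=
  invtCore_le_comap D R 1 (hR.le_invtCore hmul hD hDB hr)

theorem IsLeftLeibniz.isIdealIn_ker (hmul : IsLeftLeibniz mul) :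
    IsIdealIn mul (LinearMap.ker mul) ⊤ := by
  refine ⟨le_top, fun x _ y (hy : mul y = 0) => ⟨?_, ?_⟩⟩
  · ext z
    simpa [hy] using (hmul x y z).symm
  · simp [hy]

theorem IsLeftLeibniz.mul_add_mul_mem_ker (hmul : IsLeftLeibniz mul) (x y : A) :
    mul x y + mul y x ∈ LinearMap.ker mul := by
  ext z
  rw [map_add, LinearMap.add_apply, LinearMap.zero_apply,
    ← sub_eq_of_eq_add (hmul x y z), ← sub_eq_of_eq_add (hmul y x z)]
  abel

theorem IsRadicalIn.inf_ker_le (hmul : IsLeftLeibniz mul) (hB : IsIdealIn mul B ⊤)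
    (hR : IsRadicalIn mul B R) : B ⊓ LinearMap.ker mul ≤ R := by
  have hideal : IsIdealIn mul (B ⊓ LinearMap.ker mul) B :=
    (hB.inf hmul.isIdealIn_ker).anti inf_le_left le_top
  refine hR.le_of_mulSub_self_le hideal (mulSub_le.2 fun x hx y _ => ?_)
  rw [LinearMap.mem_ker.1 hx.2, LinearMap.zero_apply]
  exact R.zero_mem

theorem IsRadicalIn.isIdealIn_top [CharZero F] (hmul : IsLeftLeibniz mul)
    (hB : IsIdealIn mul B ⊤) (hR : IsRadicalIn mul B R) : IsIdealIn mul R ⊤ := by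
  refine ⟨le_top, fun x _ r hr => ?_⟩
  have hBx := hB.2 x mem_top r (hR.1.1 hr)
  have hleft : mul x r ∈ R :=
    hR.derivation_mem hmul (hmul x) (fun b hb => (hB.2 x mem_top b hb).1) hr
  have hsum : mul x r + mul r x ∈ R :=
    hR.inf_ker_le hmul hB ⟨add_mem hBx.1 hBx.2, hmul.mul_add_mul_mem_ker x r⟩
  exact ⟨hleft, (R.add_mem_iff_right hleft).1 hsum⟩

end DerivationInvariance

section LeftMultiplication

attribute [local instance] LieRing.ofAssociativeRing

variable {F A : Type*} [Field F] [AddCommGroup A] [Module F A] {mul : A →ₗ[F] A →ₗ[F] A}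

theorem IsLeftLeibniz.lie_mul_apply (hmul : IsLeftLeibniz mul) (x y : A) :
    ⁅(mul x : Module.End F A), (mul y : Module.End F A)⁆ = mul (mul x y) := by
  ext z
  rw [Ring.lie_def]
  exact sub_eq_of_eq_add (hmul x y z)

/-- The Lie algebra of left multiplications of a left Leibniz algebra. -/
def leftMulLieSubalgebra (hmul : IsLeftLeibniz mul) : LieSubalgebra F (Module.End F A) where
  __ := LinearMap.range mul
  lie_mem' := by
    rintro _ _ ⟨x, rfl⟩ ⟨y, rfl⟩
    exact ⟨mul x y, (hmul.lie_mul_apply x y).symm⟩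

/-- The surjection `x ↦ (y ↦ x y)` onto the Lie algebra of left multiplications. -/
def leftMul (hmul : IsLeftLeibniz mul) : A →ₗ[F] leftMulLieSubalgebra hmul :=
  mul.rangeRestrict

theorem lie_leftMul (hmul : IsLeftLeibniz mul) (x y : A) :
    ⁅leftMul hmul x, leftMul hmul y⁆ = leftMul hmul (mul x y) :=
  Subtype.ext (hmul.lie_mul_apply x y)

variable {I : Submodule F A}

/-- The Lie ideal of left multiplications by the elements of an ideal `I`. -/
def leftMulIdeal (hmul : IsLeftLeibniz mul) (hI : IsIdealIn mul I ⊤) :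
    LieIdeal F (leftMulLieSubalgebra hmul) where
  __ := I.map (leftMul hmul)
  lie_mem := by
    rintro ⟨_, x, rfl⟩ _ ⟨y, hy, rfl⟩
    exact ⟨mul x y, (hI.2 x mem_top y hy).1, (lie_leftMul hmul x y).symm⟩

theorem derivedSeriesOfIdeal_leftMulIdeal_le (hmul : IsLeftLeibniz mul)
    (hI : IsIdealIn mul I ⊤) (n : ℕ) :
    LieAlgebra.derivedSeriesOfIdeal F (leftMulLieSubalgebra hmul) n (leftMulIdeal hmul hI) ≤
      leftMulIdeal hmul (hI.ds hmul n) := by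
  induction n with
  | zero => exact le_rfl
  | succ n ih =>
    rw [LieAlgebra.derivedSeriesOfIdeal_succ, LieSubmodule.lie_le_iff]
    intro f hf g hg
    obtain ⟨x, hx, rfl⟩ := ih hf
    obtain ⟨y, hy, rfl⟩ := ih hg
    exact ⟨mul x y, mul_mem_mulSub hx hy, (lie_leftMul hmul x y).symm⟩

theorem isSolvable_leftMulIdeal (hmul : IsLeftLeibniz mul) (hI : IsIdealIn mul I ⊤)
    (hsolv : IsSolvableSub mul I) : LieAlgebra.IsSolvable (leftMulIdeal hmul hI) := by
  obtain ⟨m, hm⟩ := hsolv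
  refine LieAlgebra.IsSolvable.mk (R := F) (k := m) ?_
  rw [LieIdeal.derivedSeries_eq_bot_iff, eq_bot_iff]
  intro f hf
  obtain ⟨y, hy, rfl⟩ := derivedSeriesOfIdeal_leftMulIdeal_le hmul hI m hf
  rw [hm, SetLike.mem_coe, mem_bot] at hy
  rw [hy, map_zero]
  exact zero_mem _

theorem fSub_top_le_comap_leftMul (hmul : IsLeftLeibniz mul) (hI : IsIdealIn mul I ⊤) :
    fSub mul ⊤ I ≤ (LieSubmodule.toSubmodule
      ⁅(⊤ : LieIdeal F (leftMulLieSubalgebra hmul)), leftMulIdeal hmul hI⁆).comap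
        (leftMul hmul) := by
  refine sup_le (mulSub_le.2 fun x _ y hy => ?_) (mulSub_le.2 fun y hy x _ => ?_)
  all_goals rw [mem_comap, ← lie_leftMul, LieSubmodule.mem_toSubmodule]
  · exact LieSubmodule.lie_mem_lie (LieSubmodule.mem_top _) ⟨y, hy, rfl⟩
  · rw [LieSubmodule.lie_comm]
    exact LieSubmodule.lie_mem_lie ⟨y, hy, rfl⟩ (LieSubmodule.mem_top _)

theorem lcs_le_lcs_of_le_comap_leftMul (hmul : IsLeftLeibniz mul) {P : Submodule F A}
    {J : LieIdeal F (leftMulLieSubalgebra hmul)}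
    (hP : P ≤ (LieSubmodule.toSubmodule J).comap (leftMul hmul)) (n : ℕ) :
    lcs mul P n ≤ LieSubmodule.toSubmodule (J.lcs A n) := by
  induction n with
  | zero => exact le_top
  | succ n ih =>
    refine mulSub_le.2 fun x hx y hy => ?_
    rw [LieIdeal.lcs_succ]
    exact LieSubmodule.lie_mem_lie (x := leftMul hmul x) (hP hx) (ih hy)

theorem isNilpotentSub_fSub_top [CharZero F] [FiniteDimensional F A] (hmul : IsLeftLeibniz mul)
    (hI : IsIdealIn mul I ⊤) (hsolv : IsSolvableSub mul I) :
    IsNilpotentSub mul (fSub mul ⊤ I) := by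
  have := isSolvable_leftMulIdeal hmul hI hsolv
  obtain ⟨n, hn⟩ := exists_lcs_eq_bot_of_forall_isNilpotent_toEnd fun y =>
    isNilpotent_toEnd_of_mem_top_lie_of_isSolvable (leftMulIdeal hmul hI) A (y := y)
  have hle := lcs_le_lcs_of_le_comap_leftMul hmul (fSub_top_le_comap_leftMul hmul hI) n
  rw [hn] at hle
  exact ⟨n, le_bot_iff.1 hle⟩

end LeftMultiplication

/-- over characteristic zero, if `B ◁ A`, `R = rad(B)`,
`N = nilrad(B)`, then `R` and `N` are ideals of `A` and `A·R + R·A ⊆ N`. -/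
theorem stmt_13 {F A : Type*} [Field F] [CharZero F]
    [AddCommGroup A] [Module F A] [FiniteDimensional F A]
    (mul : A →ₗ[F] A →ₗ[F] A)
    (hleib : ∀ x y z : A, mul x (mul y z) = mul (mul x y) z + mul y (mul x z))
    (B R N : Submodule F A)
    (hB : IsIdealIn mul B ⊤)
    (hR : IsRadicalIn mul B R) (hN : IsNilradicalIn mul B N) :
    IsIdealIn mul R ⊤ ∧ IsIdealIn mul N ⊤ ∧ fSub mul ⊤ R ≤ N := by
  have hRideal : IsIdealIn mul R ⊤ := hR.isIdealIn_top hleib hB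
  have hfR : fSub mul ⊤ R ≤ R := isIdealIn_top_iff_fSub_le.1 hRideal
  have hfideal : IsIdealIn mul (fSub mul ⊤ R) ⊤ :=
    isIdealIn_top_iff_fSub_le.2 (fSub_mono le_rfl hfR)
  have hfN : fSub mul ⊤ R ≤ N :=
    hN.2.2 _ (hfideal.anti (hfR.trans hR.1.1) le_top)
      (isNilpotentSub_fSub_top hleib hRideal hR.2.1)
  have hNR : N ≤ R := hR.2.2 N hN.1 (hN.1.isSubalg.isSolvableSub hN.2.1)
  exact ⟨hRideal, isIdealIn_top_iff_fSub_le.2 ((fSub_mono le_rfl hNR).trans hfN), hfN⟩
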